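/- arXiv:2507.03820 — 2 statements merged into one kernel-verified Lean document; each statement's English description precedes it below -/
import Mathlib

section
/- Let σ ∈ ℝ, let κ : ℝ[X] → ℝ be the linear functional with κ(X^2) = σ² and κ(X^m) = 0 for all m ≠ 2, and let μ = exp_∗(κ) (the Gaussian moment functional of variance σ²). Then the associated Wick map satisfies, for every n ≥ 0, W(X^n) = n! Σ_{k=0}^{⌊n/2⌋} ((−1)^k/(k!(n−2k)! 2^k)) σ^{2k} X^{n−2k}, i.e. W(X^n) is the n-th Hermite polynomial with variance σ². -/
open Polynomial

/-- The convolution product of two linear functionals on `ℝ[X]`, determined on the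
monomial basis by `(φ∗ψ)(X^n) = Σ_{k=0}^n (n choose k) φ(X^k) ψ(X^{n−k})`. -/
noncomputable def conv (φ ψ : Polynomial ℝ →ₗ[ℝ] ℝ) : Polynomial ℝ →ₗ[ℝ] ℝ :=
  (Polynomial.basisMonomials ℝ).constr ℝ fun n =>
    ∑ k ∈ Finset.range (n + 1), (n.choose k : ℝ) * φ (X ^ k) * ψ (X ^ (n - k))

/-- The counit `ε`, with `ε(X^n) = δ_{n,0}`. -/
noncomputable def counit : Polynomial ℝ →ₗ[ℝ] ℝ := Polynomial.lcoeff ℝ 0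

/-- The `k`-fold convolution power `κ^{∗k}`, with `κ^{∗0} = ε`. -/
noncomputable def convPow (φ : Polynomial ℝ →ₗ[ℝ] ℝ) : ℕ → (Polynomial ℝ →ₗ[ℝ] ℝ)
  | 0 => counit
  | k + 1 => conv φ (convPow φ k)

/-- The convolution exponential `exp_∗(κ) = Σ_{k≥0} κ^{∗k}/k!`, a finite sum on each
`X^n` when `κ(1) = 0`. -/
noncomputable def expStar (φ : Polynomial ℝ →ₗ[ℝ] ℝ) : Polynomial ℝ →ₗ[ℝ] ℝ :=
  (Polynomial.basisMonomials ℝ).constr ℝ fun n =>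
    ∑ k ∈ Finset.range (n + 1), convPow φ k (X ^ n) / k.factorial

/-!
Attach to a functional `φ` its exponential generating series `∑ φ(Xⁿ) tⁿ / n!`. Convolution then
becomes multiplication of power series, so `exp_∗` becomes substitution into the exponential series
and the convolution inverse of `exp_∗(κ)` is `exp_∗(-κ)`. If `κ` is concentrated in the single
degree `d`, with `κ(X^d) = c`, the series of `exp_∗(-κ)` is `exp(-c t^d / d!)`, whose coefficients
are read off directly. For `d = 2` they give the Hermite polynomials, for general `d` those
of Gould and Hopper.
-/

lemma sum_range_succ_eq_sum_mul_of_not_dvd {M : Type*} [AddCommMonoid M] {d : ℕ} (hd : d ≠ 0)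
    (f : ℕ → M) (n : ℕ) (hf : ∀ k, ¬d ∣ k → f k = 0) :
    ∑ k ∈ Finset.range (n + 1), f k = ∑ k ∈ Finset.range (n / d + 1), f (d * k) := by
  symm
  refine Finset.sum_of_injOn (d * ·) (mul_right_injective₀ hd).injOn ?_ ?_ fun _ _ => rfl
  · intro k hk
    simpa [Nat.lt_succ_iff, Nat.le_div_iff_mul_le (Nat.pos_of_ne_zero hd), mul_comm] using hk
  · intro k hk hk'
    refine hf k ?_
    rintro ⟨m, rfl⟩
    refine hk' ⟨m, ?_, rfl⟩
    simpa [Nat.lt_succ_iff, Nat.le_div_iff_mul_le (Nat.pos_of_ne_zero hd), mul_comm] using hk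

lemma coeff_pow_eq_zero_of_lt {R : Type*} [CommSemiring R] {f : PowerSeries R}
    (hf : PowerSeries.constantCoeff f = 0) {n k : ℕ} (hnk : n < k) :
    PowerSeries.coeff n (f ^ k) = 0 :=
  PowerSeries.X_pow_dvd_iff.1 (pow_dvd_pow_of_dvd (PowerSeries.X_dvd_iff.2 hf) k) n hnk

lemma coeff_subst_eq_sum_range {R S : Type*} [CommRing R] [CommRing S] [Algebra R S]
    {f : PowerSeries S} (hf : PowerSeries.constantCoeff f = 0) (g : PowerSeries R) (n : ℕ) :
    PowerSeries.coeff n (g.subst f) =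
      ∑ k ∈ Finset.range (n + 1), PowerSeries.coeff k g • PowerSeries.coeff n (f ^ k) := by
  rw [PowerSeries.coeff_subst' (.of_constantCoeff_zero' hf)]
  refine finsum_eq_sum_of_support_subset _ fun k hk => ?_
  by_contra hkn
  have hnk : n < k := by simpa using hkn
  exact hk (by simp only [coeff_pow_eq_zero_of_lt hf hnk, smul_zero])

lemma exp_subst_mul_exp_subst_neg {τ A : Type*} [CommRing A] [Algebra ℚ A]
    {f : MvPowerSeries τ A} (hf : PowerSeries.HasSubst f) :
    (PowerSeries.exp A).subst f * (PowerSeries.exp A).subst (-f) = 1 := by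
  have hX : PowerSeries.HasSubst (-PowerSeries.X : PowerSeries A) :=
    .of_constantCoeff_zero' (by simp)
  have hneg : PowerSeries.subst f (-PowerSeries.X : PowerSeries A) = -f := by
    rw [← PowerSeries.coe_substAlgHom hf, map_neg, PowerSeries.substAlgHom_X hf]
  have hexp : PowerSeries.subst (-f) (PowerSeries.exp A) =
      PowerSeries.subst f (PowerSeries.evalNegHom (PowerSeries.exp A)) := by
    rw [PowerSeries.evalNegHom, PowerSeries.rescale_eq_subst, neg_one_smul,
      PowerSeries.subst_comp_subst_apply hX hf, hneg]
  rw [hexp, ← PowerSeries.subst_mul hf, PowerSeries.exp_mul_exp_neg_eq_one,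
    ← PowerSeries.coe_substAlgHom hf, map_one]

lemma conv_X_pow (φ ψ : ℝ[X] →ₗ[ℝ] ℝ) (n : ℕ) :
    conv φ ψ (X ^ n) =
      ∑ k ∈ Finset.range (n + 1), (n.choose k : ℝ) * φ (X ^ k) * ψ (X ^ (n - k)) := by
  rw [← monomial_one_right_eq_X_pow]
  exact (basisMonomials ℝ).constr_basis ℝ _ n

lemma expStar_X_pow (φ : ℝ[X] →ₗ[ℝ] ℝ) (n : ℕ) :
    expStar φ (X ^ n) = ∑ k ∈ Finset.range (n + 1), convPow φ k (X ^ n) / k.factorial := by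
  rw [← monomial_one_right_eq_X_pow]
  refine ((basisMonomials ℝ).constr_basis ℝ _ n).trans ?_
  simp only [monomial_one_right_eq_X_pow]

/-- The exponential generating series `∑ φ(Xⁿ) tⁿ / n!` of the moments of a functional `φ`; it
identifies the convolution algebra of functionals with the algebra of power series. -/
noncomputable def momentSeries (φ : ℝ[X] →ₗ[ℝ] ℝ) : PowerSeries ℝ :=
  PowerSeries.mk fun n => φ (X ^ n) / n.factorial

@[simp]
lemma coeff_momentSeries (φ : ℝ[X] →ₗ[ℝ] ℝ) (n : ℕ) :
    PowerSeries.coeff n (momentSeries φ) = φ (X ^ n) / n.factorial :=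
  PowerSeries.coeff_mk _ _

lemma constantCoeff_momentSeries (φ : ℝ[X] →ₗ[ℝ] ℝ) :
    PowerSeries.constantCoeff (momentSeries φ) = φ 1 := by
  simp [← PowerSeries.coeff_zero_eq_constantCoeff_apply]

lemma apply_X_pow_eq_factorial_mul_coeff (φ : ℝ[X] →ₗ[ℝ] ℝ) (n : ℕ) :
    φ (X ^ n) = n.factorial * PowerSeries.coeff n (momentSeries φ) := by
  rw [coeff_momentSeries, mul_div_cancel₀ _ (by positivity)]

lemma momentSeries_injective : Function.Injective momentSeries := by
  intro φ ψ h
  refine (basisMonomials ℝ).ext fun n => ?_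
  simp only [coe_basisMonomials, monomial_one_right_eq_X_pow, apply_X_pow_eq_factorial_mul_coeff, h]

lemma momentSeries_neg (φ : ℝ[X] →ₗ[ℝ] ℝ) : momentSeries (-φ) = -momentSeries φ := by
  ext n
  simp [neg_div]

lemma momentSeries_counit : momentSeries counit = 1 := by
  ext n
  rcases eq_or_ne n 0 with rfl | hn
  · simp [counit]
  · simp [counit, PowerSeries.coeff_one, coeff_X_pow, hn, hn.symm]

lemma momentSeries_conv (φ ψ : ℝ[X] →ₗ[ℝ] ℝ) :
    momentSeries (conv φ ψ) = momentSeries φ * momentSeries ψ := by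
  ext n
  rw [PowerSeries.coeff_mul, Finset.Nat.sum_antidiagonal_eq_sum_range_succ_mk, coeff_momentSeries,
    conv_X_pow, Finset.sum_div]
  refine Finset.sum_congr rfl fun k hk => ?_
  rw [coeff_momentSeries, coeff_momentSeries,
    Nat.cast_choose ℝ (Nat.lt_succ_iff.1 (Finset.mem_range.1 hk))]
  have : (n.factorial : ℝ) ≠ 0 := by positivity
  field_simp

lemma momentSeries_convPow (φ : ℝ[X] →ₗ[ℝ] ℝ) (k : ℕ) :
    momentSeries (convPow φ k) = momentSeries φ ^ k := by
  induction k with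
  | zero => rw [convPow, momentSeries_counit, pow_zero]
  | succ k ih => rw [convPow, momentSeries_conv, ih, pow_succ']

lemma coeff_momentSeries_expStar (φ : ℝ[X] →ₗ[ℝ] ℝ) (n : ℕ) :
    PowerSeries.coeff n (momentSeries (expStar φ)) =
      ∑ k ∈ Finset.range (n + 1),
        (k.factorial : ℝ)⁻¹ * PowerSeries.coeff n (momentSeries φ ^ k) := by
  rw [coeff_momentSeries, expStar_X_pow, Finset.sum_div]
  refine Finset.sum_congr rfl fun k _ => ?_
  rw [← momentSeries_convPow, coeff_momentSeries]
  ring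

lemma hasSubst_momentSeries {φ : ℝ[X] →ₗ[ℝ] ℝ} (hφ : φ 1 = 0) :
    PowerSeries.HasSubst (momentSeries φ) :=
  .of_constantCoeff_zero' ((constantCoeff_momentSeries φ).trans hφ)

lemma momentSeries_expStar {φ : ℝ[X] →ₗ[ℝ] ℝ} (hφ : φ 1 = 0) :
    momentSeries (expStar φ) = (PowerSeries.exp ℝ).subst (momentSeries φ) := by
  ext n
  rw [coeff_momentSeries_expStar,
    coeff_subst_eq_sum_range ((constantCoeff_momentSeries φ).trans hφ)]
  simp [PowerSeries.coeff_exp]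

lemma conv_expStar_expStar_neg {φ : ℝ[X] →ₗ[ℝ] ℝ} (hφ : φ 1 = 0) :
    conv (expStar φ) (expStar (-φ)) = counit := by
  apply momentSeries_injective
  rw [momentSeries_conv, momentSeries_expStar hφ, momentSeries_expStar (by simp [hφ]),
    momentSeries_neg, exp_subst_mul_exp_subst_neg (hasSubst_momentSeries hφ), momentSeries_counit]

lemma conv_right_inverse_unique {φ ψ ψ' : ℝ[X] →ₗ[ℝ] ℝ} (h : conv φ ψ = counit)
    (h' : conv φ ψ' = counit) : ψ = ψ' := by
  apply momentSeries_injective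
  apply inv_unique (x := momentSeries φ)
  · rw [← momentSeries_conv, h, momentSeries_counit]
  · rw [← momentSeries_conv, h', momentSeries_counit]

section Homogeneous

variable {d : ℕ} {c : ℝ} {φ : ℝ[X] →ₗ[ℝ] ℝ}

lemma momentSeries_eq_monomial (hφ : ∀ n, φ (X ^ n) = if n = d then c else 0) :
    momentSeries φ = PowerSeries.monomial d (c / d.factorial) := by
  ext n
  rw [coeff_momentSeries, hφ, PowerSeries.coeff_monomial]
  split_ifs with h
  · rw [h]
  · rw [zero_div]

lemma coeff_momentSeries_pow_of_homogeneous (hφ : ∀ n, φ (X ^ n) = if n = d then c else 0)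
    (n k : ℕ) :
    PowerSeries.coeff n (momentSeries φ ^ k) = if n = d * k then (c / d.factorial) ^ k else 0 := by
  rw [momentSeries_eq_monomial hφ, PowerSeries.monomial_pow, PowerSeries.coeff_monomial, mul_comm]

lemma expStar_X_pow_mul_of_homogeneous (hd : d ≠ 0)
    (hφ : ∀ n, φ (X ^ n) = if n = d then c else 0) (m : ℕ) :
    expStar φ (X ^ (d * m)) =
      (d * m).factorial / (m.factorial * d.factorial ^ m) * c ^ m := by
  rw [apply_X_pow_eq_factorial_mul_coeff, coeff_momentSeries_expStar, Finset.sum_eq_single m]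
  · rw [coeff_momentSeries_pow_of_homogeneous hφ, if_pos rfl, div_pow]
    field_simp
  · intro k _ hkm
    rw [coeff_momentSeries_pow_of_homogeneous hφ, if_neg, mul_zero]
    exact fun h => hkm (Nat.eq_of_mul_eq_mul_left (Nat.pos_of_ne_zero hd) h).symm
  · exact fun hm => (hm (Finset.mem_range_succ_iff.2
      (Nat.le_mul_of_pos_left m (Nat.pos_of_ne_zero hd)))).elim

lemma expStar_X_pow_of_not_dvd (hφ : ∀ n, φ (X ^ n) = if n = d then c else 0) {n : ℕ}
    (hn : ¬d ∣ n) : expStar φ (X ^ n) = 0 := by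
  rw [apply_X_pow_eq_factorial_mul_coeff, coeff_momentSeries_expStar, Finset.sum_eq_zero, mul_zero]
  intro k _
  rw [coeff_momentSeries_pow_of_homogeneous hφ, if_neg fun h => hn ⟨k, h⟩, mul_zero]

end Homogeneous

theorem stmt_10_general {d : ℕ} (hd : d ≠ 0) (c : ℝ) (κ μinv : ℝ[X] →ₗ[ℝ] ℝ)
    (hκ : ∀ n : ℕ, κ (X ^ n) = if n = d then c else 0)
    (hμ : conv (expStar κ) μinv = counit) (n : ℕ) :
    ∑ k ∈ Finset.range (n + 1), ((n.choose k : ℝ) * μinv (X ^ k)) • (X ^ (n - k) : ℝ[X]) =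
      ∑ k ∈ Finset.range (n / d + 1),
        ((n.factorial : ℝ) * ((-1 : ℝ) ^ k /
            ((k.factorial : ℝ) * ((n - d * k).factorial : ℝ) * d.factorial ^ k)) * c ^ k) •
          (X ^ (n - d * k) : ℝ[X]) := by
  have hκ_one : κ 1 = 0 := by simpa [hd.symm] using hκ 0
  have hκ_neg : ∀ n, (-κ) (X ^ n) = if n = d then -c else 0 := fun n => by
    rw [LinearMap.neg_apply, hκ, neg_ite, neg_zero]
  have hμinv : μinv = expStar (-κ) :=
    conv_right_inverse_unique hμ (conv_expStar_expStar_neg hκ_one)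
  rw [hμinv, sum_range_succ_eq_sum_mul_of_not_dvd hd]
  · refine Finset.sum_congr rfl fun k hk => ?_
    have hkn : d * k ≤ n := (Nat.mul_le_mul_left d (Finset.mem_range_succ_iff.1 hk)).trans
      (Nat.mul_div_le n d)
    rw [expStar_X_pow_mul_of_homogeneous hd hκ_neg, Nat.cast_choose ℝ hkn, neg_pow]
    have : ((d * k).factorial : ℝ) ≠ 0 := by positivity
    congr 1
    field_simp
  · intro k hk
    rw [expStar_X_pow_of_not_dvd hκ_neg hk, mul_zero, zero_smul]

/-- Let `κ` be the linear functional with `κ(X²) = σ²` and `κ(X^m) = 0` for `m ≠ 2`, let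
`μ = exp_∗(κ)` be the Gaussian moment functional of variance `σ²` and `μ⁻¹` its
convolution inverse. Then the Wick map `W(X^n) = Σ_{k=0}^n (n choose k) μ⁻¹(X^k) X^{n−k}`
gives `W(X^n) = n! Σ_{k=0}^{⌊n/2⌋} ((−1)^k/(k!(n−2k)!2^k)) σ^{2k} X^{n−2k}`,
the `n`-th Hermite polynomial with variance `σ²`. -/
theorem stmt_10 (σ : ℝ) (κ μinv : Polynomial ℝ →ₗ[ℝ] ℝ)
    (hκ : ∀ n : ℕ, κ (X ^ n) = if n = 2 then σ ^ 2 else 0)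
    (hr : conv (expStar κ) μinv = counit) (hl : conv μinv (expStar κ) = counit) :
    ∀ n : ℕ,
      ∑ k ∈ Finset.range (n + 1), ((n.choose k : ℝ) * μinv (X ^ k)) • (X ^ (n - k) : Polynomial ℝ) =
      ∑ k ∈ Finset.range (n / 2 + 1),
        ((n.factorial : ℝ) * ((-1 : ℝ) ^ k /
            ((k.factorial : ℝ) * ((n - 2 * k).factorial : ℝ) * 2 ^ k)) * σ ^ (2 * k)) •
          (X ^ (n - 2 * k) : Polynomial ℝ) := by
  intro n
  simpa only [Nat.factorial_two, Nat.cast_two, ← pow_mul] using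
    stmt_10_general two_ne_zero (σ ^ 2) κ μinv hκ hr n
end

section
/- Let m ≥ 2 and σ_2, …, σ_m ∈ ℝ, let κ : ℝ[X] → ℝ[Y] be the linear map with κ(1) = κ(X) = 0, κ(X^p) = σ_p Y for 2 ≤ p ≤ m and κ(X^p) = 0 for p > m, and let W = (exp_∗(−κ) ⊗ id)Δ be the associated Wick map. Then for every n ≥ 2, W(X^n) = B_n(X, −σ_2 Y, …, −σ_n Y), i.e. W(X^n) = n! Σ_{j_1,…,j_n ≥ 0, j_1+2j_2+⋯+nj_n = n} (X^{j_1}/j_1!) ∏_{p=2}^n (1/j_p!)(−σ_p Y/p!)^{j_p}, where σ_p = 0 for p > m and B_n is the n-th complete exponential Bell polynomial. -/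
open Polynomial

/- `ℝ[X,Y]` is realised as `MvPolynomial (Fin 2) ℝ`, identifying `ℝ[Y] ⊗ ℝ[X]` with
`ℝ[X,Y]`, with `X := MvPolynomial.X 0` and `Y := MvPolynomial.X 1`. -/

/-- The variable `X` of `ℝ[X,Y]`. -/
noncomputable def Xv : MvPolynomial (Fin 2) ℝ := MvPolynomial.X 0

/-- The variable `Y` of `ℝ[X,Y]`. -/
noncomputable def Yv : MvPolynomial (Fin 2) ℝ := MvPolynomial.X 1

/-- The `ℝ[X,Y]`-valued convolution product of linear maps `ℝ[X] → ℝ[X,Y]`,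
determined on the monomial basis by `(φ∗ψ)(X^n) = Σ_{k=0}^n (n choose k) φ(X^k)ψ(X^{n−k})`. -/
noncomputable def convA (φ ψ : Polynomial ℝ →ₗ[ℝ] MvPolynomial (Fin 2) ℝ) :
    Polynomial ℝ →ₗ[ℝ] MvPolynomial (Fin 2) ℝ :=
  (Polynomial.basisMonomials ℝ).constr ℝ fun n =>
    ∑ k ∈ Finset.range (n + 1), (n.choose k : ℝ) • (φ (X ^ k) * ψ (X ^ (n - k)))

/-- The unit of the convolution algebra: `X^n ↦ δ_{n,0}·1`. -/
noncomputable def counitA : Polynomial ℝ →ₗ[ℝ] MvPolynomial (Fin 2) ℝ :=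
  (Algebra.linearMap ℝ (MvPolynomial (Fin 2) ℝ)).comp (Polynomial.lcoeff ℝ 0)

/-- The `k`-fold convolution power `θ^{∗k}`, with `θ^{∗0}` the convolution unit. -/
noncomputable def convPowA (φ : Polynomial ℝ →ₗ[ℝ] MvPolynomial (Fin 2) ℝ) :
    ℕ → (Polynomial ℝ →ₗ[ℝ] MvPolynomial (Fin 2) ℝ)
  | 0 => counitA
  | k + 1 => convA φ (convPowA φ k)

/-- The convolution exponential `exp_∗(θ) = Σ_{k≥0} θ^{∗k}/k!`, a finite sum on each
`X^n` when `θ(1) = 0`. -/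
noncomputable def expStarA (φ : Polynomial ℝ →ₗ[ℝ] MvPolynomial (Fin 2) ℝ) :
    Polynomial ℝ →ₗ[ℝ] MvPolynomial (Fin 2) ℝ :=
  (Polynomial.basisMonomials ℝ).constr ℝ fun n =>
    ∑ k ∈ Finset.range (n + 1), ((k.factorial : ℝ))⁻¹ • convPowA φ k (X ^ n)

/-- The index set of the complete Bell polynomial: tuples `(j_1,…,j_n)` of nonnegative
integers with `j_1 + 2j_2 + ⋯ + nj_n = n`, encoded as `j : Fin n → ℕ` where `j i`
stands for `j_{i+1}`. -/
noncomputable def bellIdx (n : ℕ) : Finset (Fin n → ℕ) :=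
  (Fintype.piFinset fun _ => Finset.range (n + 1)).filter fun j =>
    ∑ i : Fin n, ((i : ℕ) + 1) * j i = n

/-!
A linear map `φ` on `ℝ[X]` is encoded by the power series `∑ φ(Xⁿ) tⁿ / n!`. Convolution becomes
multiplication of power series, so `exp_∗(θ)` has as its series the exponential of the series of
`θ`, and the Wick map has the series `exp (X t - ∑ κ(Xᵖ) tᵖ / p!)`. To read off the coefficient of
`tⁿ`, truncate the exponent at degree `n` and factor the exponential of the resulting finite sum
into exponentials of monomials `a tᵖ`: choosing the term of degree `p * jₚ` in the `p`-th factor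
gives the sum over the `j` with `∑ p * jₚ = n` that defines the Bell polynomial.
-/

theorem mem_bellIdx {n : ℕ} {j : Fin n → ℕ} :
    j ∈ bellIdx n ↔ ∑ i : Fin n, ((i : ℕ) + 1) * j i = n := by
  simp only [bellIdx, Finset.mem_filter, Fintype.mem_piFinset, Finset.mem_range,
    and_iff_right_iff_imp, Nat.lt_succ_iff]
  intro hj i
  calc j i ≤ ((i : ℕ) + 1) * j i := Nat.le_mul_of_pos_left _ (Nat.succ_pos _)
    _ ≤ ∑ i : Fin n, ((i : ℕ) + 1) * j i :=
      Finset.single_le_sum_of_canonicallyOrdered (f := fun i : Fin n ↦ ((i : ℕ) + 1) * j i)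
        (Finset.mem_univ i)
    _ = n := hj

section ExponentialSeries

open PowerSeries Finset

theorem coe_trunc_eq_sum_monomial {R : Type*} [CommSemiring R] (f : R⟦X⟧) (n : ℕ) :
    (trunc n f : R⟦X⟧) = ∑ i ∈ range n, PowerSeries.monomial i (coeff i f) := by
  rw [trunc_apply, Nat.Ico_zero_eq_range, ← Polynomial.coeToPowerSeries.ringHom_apply, map_sum]
  simp

variable (K : Type*) [Field K] [CharZero K]

theorem exp_subst_X_add_X :
    (exp K).subst (MvPowerSeries.X 0 + MvPowerSeries.X 1 : MvPowerSeries (Fin 2) K) =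
      (exp K).subst (MvPowerSeries.X 0 : MvPowerSeries (Fin 2) K) *
        (exp K).subst (MvPowerSeries.X 1 : MvPowerSeries (Fin 2) K) := by
  ext e
  have := Nat.factorial_ne_zero (e 0 + e 1)
  rw [coeff_subst_X_zero_add_X_one, coeff_subst_X_zero_subst_mul_X_one, Nat.cast_add_choose]
  simp only [coeff_exp, map_div₀, map_one, map_natCast]
  field_simp

variable {A : Type*} [CommRing A] [Algebra K A]

theorem exp_subst_add {f g : A⟦X⟧} (hf : f.constantCoeff = 0) (hg : g.constantCoeff = 0) :
    (exp K).subst (f + g) = (exp K).subst f * (exp K).subst g := by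
  have hfg : MvPowerSeries.HasSubst ![f, g] :=
    MvPowerSeries.hasSubst_of_constantCoeff_zero (by simpa [Fin.forall_fin_two] using ⟨hf, hg⟩)
  have subst_subst {a : MvPowerSeries (Fin 2) K} (ha : a.constantCoeff = 0) :
      MvPowerSeries.subst ![f, g] ((exp K).subst a) =
        (exp K).subst (MvPowerSeries.subst ![f, g] a) :=
    MvPowerSeries.subst_comp_subst_apply (HasSubst.of_constantCoeff_zero ha).const hfg _
  have h := congrArg (MvPowerSeries.subst ![f, g]) (exp_subst_X_add_X K)
  rw [MvPowerSeries.subst_mul hfg, subst_subst (by simp), subst_subst (by simp),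
    subst_subst (by simp)] at h
  simpa [MvPowerSeries.subst_add hfg, MvPowerSeries.subst_X hfg] using h

theorem exp_subst_sum {ι : Type*} (s : Finset ι) {f : ι → A⟦X⟧}
    (hf : ∀ i ∈ s, (f i).constantCoeff = 0) :
    (exp K).subst (∑ i ∈ s, f i) = ∏ i ∈ s, (exp K).subst (f i) := by
  classical
  induction s using Finset.induction_on with
  | empty => simp [subst_zero_eq_C_constantCoeff]
  | insert i s hi ih =>
    rw [forall_mem_insert] at hf
    rw [sum_insert hi, prod_insert hi, ← ih hf.2]
    exact exp_subst_add K hf.1 (by rw [map_sum, sum_eq_zero hf.2])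

theorem coeff_exp_subst {f : A⟦X⟧} (hf : f.constantCoeff = 0) (n : ℕ) :
    coeff n ((exp K).subst f) =
      ∑ k ∈ range (n + 1), (k.factorial : K)⁻¹ • coeff n (f ^ k) := by
  have hsupp : (fun k ↦ coeff k (exp K) • coeff n (f ^ k)).support ⊆ ↑(range (n + 1)) := by
    intro k hk
    by_contra hkn
    have hnk : (n : ℕ∞) < k := by simpa using hkn
    have horder := hnk.trans_le (le_order_pow_of_constantCoeff_eq_zero k hf)
    exact hk (by simp only [coeff_of_lt_order n horder, smul_zero])
  rw [coeff_subst' (.of_constantCoeff_zero' hf), finsum_eq_sum_of_support_subset _ hsupp]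
  simp

theorem coeff_exp_subst_trunc {f : A⟦X⟧} (hf : f.constantCoeff = 0) (n : ℕ) :
    coeff n ((exp K).subst (trunc (n + 1) f : A⟦X⟧)) = coeff n ((exp K).subst f) := by
  have htrunc : (trunc (n + 1) f : A⟦X⟧).constantCoeff = 0 := by simpa [coeff_trunc] using hf
  rw [coeff_exp_subst K hf, coeff_exp_subst K htrunc]
  refine sum_congr rfl fun k _ ↦ ?_
  rw [← coeff_coe_trunc_of_lt n.lt_succ_self, trunc_trunc_pow,
    coeff_coe_trunc_of_lt n.lt_succ_self]

theorem constantCoeff_monomial_of_ne_zero {R : Type*} [Semiring R] {p : ℕ} (hp : p ≠ 0) (a : R) :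
    (PowerSeries.monomial p a).constantCoeff = 0 := by
  rw [← coeff_zero_eq_constantCoeff_apply, PowerSeries.coeff_monomial, if_neg hp.symm]

theorem coeff_exp_subst_monomial {p : ℕ} (hp : p ≠ 0) (a : A) (n : ℕ) :
    coeff n ((exp K).subst (PowerSeries.monomial p a)) =
      if p ∣ n then ((n / p).factorial : K)⁻¹ • a ^ (n / p) else 0 := by
  simp only [coeff_exp_subst K (constantCoeff_monomial_of_ne_zero hp a), PowerSeries.monomial_pow,
    PowerSeries.coeff_monomial]
  split_ifs with h
  · obtain ⟨k, rfl⟩ := h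
    have hk : k ∈ range (p * k + 1) :=
      mem_range_succ_iff.2 (Nat.le_mul_of_pos_left k hp.bot_lt)
    rw [Nat.mul_div_cancel_left k hp.bot_lt, sum_eq_single_of_mem k hk]
    · rw [if_pos (mul_comm p k)]
    · intro l _ hl
      rw [if_neg fun h ↦ hl (Nat.eq_of_mul_eq_mul_left hp.bot_lt (h.trans (mul_comm l p))).symm,
        smul_zero]
  · refine sum_eq_zero fun k _ ↦ ?_
    rw [if_neg fun hk ↦ h (Dvd.intro_left k hk.symm), smul_zero]

theorem coeff_prod_exp_subst_monomial (n : ℕ) (a : Fin n → A) :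
    coeff n (∏ i : Fin n, (exp K).subst (PowerSeries.monomial (i + 1 : ℕ) (a i))) =
      ∑ j ∈ bellIdx n, ∏ i : Fin n, ((j i).factorial : K)⁻¹ • a i ^ j i := by
  rw [coeff_prod]
  simp_rw [coeff_exp_subst_monomial K (Nat.succ_ne_zero _)]
  symm
  refine sum_of_injOn
    (fun j ↦ Finsupp.equivFunOnFinite.symm fun i : Fin n ↦ (i + 1) * j i) ?_ ?_ ?_ ?_
  · intro j _ j' _ h
    funext i
    simpa using DFunLike.congr_fun h i
  · intro j hj
    simpa using mem_bellIdx.1 hj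
  · intro l hl hl'
    obtain ⟨i, hi⟩ : ∃ i : Fin n, ¬ (i + 1 : ℕ) ∣ l i := by
      by_contra! hdvd
      choose j hj using hdvd
      refine hl' ⟨j, mem_bellIdx.2 ?_, ?_⟩
      · simpa [← hj] using hl
      · ext i
        simp [hj]
    exact prod_eq_zero (mem_univ i) (if_neg hi)
  · intro j _
    simp

theorem coeff_exp_subst_eq_sum_bellIdx {f : A⟦X⟧} (hf : f.constantCoeff = 0) (n : ℕ) :
    coeff n ((exp K).subst f) =
      ∑ j ∈ bellIdx n, ∏ i : Fin n, ((j i).factorial : K)⁻¹ • coeff (i + 1 : ℕ) f ^ j i := by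
  have htrunc : (trunc (n + 1) f : A⟦X⟧) =
      ∑ i : Fin n, PowerSeries.monomial (i + 1 : ℕ) (coeff (i + 1 : ℕ) f) := by
    rw [coe_trunc_eq_sum_monomial, sum_range_succ', coeff_zero_eq_constantCoeff_apply, hf,
      map_zero, add_zero, Fin.sum_univ_eq_sum_range fun i ↦
        PowerSeries.monomial (i + 1) (coeff (i + 1) f)]
  rw [← coeff_exp_subst_trunc K hf, htrunc, exp_subst_sum, coeff_prod_exp_subst_monomial]
  exact fun i _ ↦ constantCoeff_monomial_of_ne_zero i.val.succ_ne_zero _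

end ExponentialSeries

section ExponentialGeneratingFunction

open PowerSeries Finset

variable (K : Type*) {A : Type*} [Field K] [CommRing A] [Algebra K A]

/-- The exponential generating function `∑ xₙ tⁿ / n!` of a sequence in a `K`-algebra. -/
noncomputable def egf (x : ℕ → A) : A⟦X⟧ :=
  PowerSeries.mk fun n ↦ (n.factorial : K)⁻¹ • x n

/-- The `n`-th complete exponential Bell polynomial, evaluated at `(x 1, …, x n)`. -/
noncomputable def completeBell (x : ℕ → A) (n : ℕ) : A :=
  (n.factorial : K) • ∑ j ∈ bellIdx n,
    ∏ i : Fin n, ((j i).factorial : K)⁻¹ • (((i + 1 : ℕ).factorial : K)⁻¹ • x (i + 1)) ^ j i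

theorem coeff_egf (x : ℕ → A) (n : ℕ) : coeff n (egf K x) = (n.factorial : K)⁻¹ • x n :=
  coeff_mk n _

theorem constantCoeff_egf (x : ℕ → A) : constantCoeff (egf K x) = x 0 := by
  simp [← coeff_zero_eq_constantCoeff_apply, coeff_egf]

theorem egf_add (x y : ℕ → A) : egf K (x + y) = egf K x + egf K y := by
  ext n
  simp [coeff_egf]

theorem egf_ite_eq_one (a : A) :
    egf K (fun n ↦ if n = 1 then a else 0) = PowerSeries.monomial 1 a := by
  ext n
  rw [coeff_egf, PowerSeries.coeff_monomial]
  split_ifs with hn <;> simp [hn]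

variable [CharZero K]

theorem egf_injective : Function.Injective (egf K : (ℕ → A) → A⟦X⟧) := by
  intro x y h
  funext n
  have hn := congrArg (PowerSeries.coeff n) h
  rw [coeff_egf, coeff_egf] at hn
  exact (IsUnit.mk0 _ (inv_ne_zero (Nat.cast_ne_zero.2 n.factorial_ne_zero))).smul_left_cancel.1 hn

theorem egf_mul (x y : ℕ → A) :
    egf K x * egf K y =
      egf K fun n ↦ ∑ k ∈ range (n + 1), (n.choose k : K) • (x k * y (n - k)) := by
  ext n
  rw [PowerSeries.coeff_mul, Finset.Nat.sum_antidiagonal_eq_sum_range_succ_mk, coeff_egf, smul_sum]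
  refine sum_congr rfl fun k hk ↦ ?_
  have := Nat.factorial_ne_zero n
  rw [coeff_egf, coeff_egf, smul_mul_smul_comm, smul_smul,
    Nat.cast_choose K (mem_range_succ_iff.1 hk)]
  congr 1
  field_simp

theorem egf_pow (a : A) : egf K (a ^ ·) = (exp K).subst (PowerSeries.monomial 1 a) := by
  ext n
  simp [coeff_egf, coeff_exp_subst_monomial K one_ne_zero]

theorem egf_completeBell {x : ℕ → A} (hx : x 0 = 0) :
    egf K (completeBell K x) = (exp K).subst (egf K x) := by
  ext n
  rw [coeff_exp_subst_eq_sum_bellIdx K (by rw [constantCoeff_egf, hx]), coeff_egf, completeBell,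
    inv_smul_smul₀ (Nat.cast_ne_zero.2 n.factorial_ne_zero)]
  simp only [coeff_egf]

end ExponentialGeneratingFunction

section Convolution

variable (φ ψ : Polynomial ℝ →ₗ[ℝ] MvPolynomial (Fin 2) ℝ)

theorem basisMonomials_constr_X_pow {R M : Type*} [CommSemiring R] [AddCommMonoid M] [Module R M]
    (f : ℕ → M) (n : ℕ) : (basisMonomials R).constr R f (X ^ n) = f n := by
  rw [X_pow_eq_monomial, ← congrFun (coe_basisMonomials R) n, Module.Basis.constr_basis]

theorem convA_X_pow (n : ℕ) :
    convA φ ψ (X ^ n) =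
      ∑ k ∈ Finset.range (n + 1), (n.choose k : ℝ) • (φ (X ^ k) * ψ (X ^ (n - k))) :=
  basisMonomials_constr_X_pow _ n

theorem expStarA_X_pow (n : ℕ) :
    expStarA φ (X ^ n) =
      ∑ k ∈ Finset.range (n + 1), (k.factorial : ℝ)⁻¹ • convPowA φ k (X ^ n) :=
  basisMonomials_constr_X_pow _ n

theorem egf_convA :
    egf ℝ (fun n ↦ convA φ ψ (X ^ n)) = egf ℝ (fun n ↦ φ (X ^ n)) * egf ℝ fun n ↦ ψ (X ^ n) := by
  simp only [convA_X_pow, egf_mul]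

theorem egf_counitA : egf ℝ (fun n ↦ counitA (X ^ n)) = 1 := by
  ext1 n
  rcases eq_or_ne n 0 with rfl | hn
  · simp [coeff_egf, counitA]
  · simp [coeff_egf, counitA, coeff_X_pow, PowerSeries.coeff_one, hn, hn.symm]

theorem egf_convPowA (k : ℕ) :
    egf ℝ (fun n ↦ convPowA φ k (X ^ n)) = (egf ℝ fun n ↦ φ (X ^ n)) ^ k := by
  induction k with
  | zero => exact egf_counitA.trans (pow_zero _).symm
  | succ k ih => rw [convPowA, egf_convA, ih, pow_succ']

variable {φ} in
theorem egf_expStarA (hφ : φ 1 = 0) :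
    egf ℝ (fun n ↦ expStarA φ (X ^ n)) =
      (PowerSeries.exp ℝ).subst (egf ℝ fun n ↦ φ (X ^ n)) := by
  ext1 n
  rw [coeff_exp_subst ℝ (by rw [constantCoeff_egf, pow_zero, hφ]), coeff_egf, expStarA_X_pow,
    Finset.smul_sum]
  refine Finset.sum_congr rfl fun k _ ↦ ?_
  rw [smul_comm, ← egf_convPowA, coeff_egf]

end Convolution

section Wick

variable (κ : Polynomial ℝ →ₗ[ℝ] MvPolynomial (Fin 2) ℝ)

/-- The Wick map `W = (exp_∗(−κ) ⊗ id)Δ`, as the convolution product of `exp_∗(−κ)` with the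
inclusion `ℝ[X] → ℝ[X,Y]`. -/
noncomputable def wickMap : Polynomial ℝ →ₗ[ℝ] MvPolynomial (Fin 2) ℝ :=
  convA (expStarA (-κ)) (aeval Xv).toLinearMap

theorem wickMap_X_pow (n : ℕ) :
    wickMap κ (X ^ n) =
      ∑ k ∈ Finset.range (n + 1), (n.choose k : ℝ) • (expStarA (-κ) (X ^ k) * Xv ^ (n - k)) := by
  simp [wickMap, convA_X_pow]

variable {κ}

theorem egf_wickMap (hκ : κ 1 = 0) :
    egf ℝ (fun n ↦ wickMap κ (X ^ n)) =
      (PowerSeries.exp ℝ).subst (egf ℝ fun p ↦ (if p = 1 then Xv else 0) - κ (X ^ p)) := by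
  have hsum : egf ℝ (fun p ↦ (if p = 1 then Xv else 0) - κ (X ^ p)) =
      egf ℝ (fun p ↦ (-κ) (X ^ p)) + PowerSeries.monomial 1 Xv := by
    rw [← egf_ite_eq_one ℝ, ← egf_add]
    congr 1
    funext p
    simp [neg_add_eq_sub]
  have hincl : egf ℝ (fun n ↦ (aeval Xv).toLinearMap (X ^ n : Polynomial ℝ)) =
      (PowerSeries.exp ℝ).subst (PowerSeries.monomial 1 Xv) := by
    simpa using egf_pow ℝ Xv
  rw [wickMap, egf_convA, egf_expStarA (by simp [hκ]), hincl, hsum,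
    exp_subst_add ℝ (by simp [constantCoeff_egf, hκ])
      (constantCoeff_monomial_of_ne_zero one_ne_zero _)]

theorem stmt_18_general (hκ : κ 1 = 0) (n : ℕ) :
    wickMap κ (X ^ n) = completeBell ℝ (fun p ↦ (if p = 1 then Xv else 0) - κ (X ^ p)) n := by
  have hegf := (egf_wickMap hκ).trans (egf_completeBell ℝ (by simp [hκ])).symm
  exact congrFun (egf_injective ℝ hegf) n

end Wick

/-- Let `m ≥ 2`, let `σ_2,…,σ_m` be reals extended by `σ_p = 0` for `p > m`, let `κ` be
the linear map with `κ(1) = κ(X) = 0` and `κ(X^p) = σ_p Y` for `p ≥ 2`, and let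
`W = (exp_∗(−κ) ⊗ id)Δ` be the associated Wick map. Then for every `n ≥ 2`,
`W(X^n) = B_n(X, −σ_2 Y, …, −σ_n Y)`, i.e.
`W(X^n) = n! Σ_{j_1+2j_2+⋯+nj_n=n} (X^{j_1}/j_1!) ∏_{p=2}^n (1/j_p!)(−σ_p Y/p!)^{j_p}`. -/
theorem stmt_18 (m : ℕ) (hm : 2 ≤ m) (σ : ℕ → ℝ) (hσ : ∀ p : ℕ, m < p → σ p = 0)
    (κ : Polynomial ℝ →ₗ[ℝ] MvPolynomial (Fin 2) ℝ)
    (hκ : ∀ p : ℕ, κ (X ^ p) = if 2 ≤ p then σ p • Yv else 0) :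
    ∀ (n : ℕ) (hn2 : 2 ≤ n),
      ∑ k ∈ Finset.range (n + 1),
          (n.choose k : ℝ) • (expStarA (-κ) (X ^ k) * Xv ^ (n - k)) =
      (n.factorial : ℝ) •
        ∑ j ∈ bellIdx n,
          ((((j (⟨0, by omega⟩ : Fin n)).factorial : ℝ))⁻¹ •
              Xv ^ (j (⟨0, by omega⟩ : Fin n))) *
            ∏ i : Fin n,
              (if (i : ℕ) = 0 then (1 : MvPolynomial (Fin 2) ℝ) else
                (((j i).factorial : ℝ))⁻¹ •
                  (((-(σ ((i : ℕ) + 1)) / ((((i : ℕ) + 1).factorial : ℝ))) • Yv) ^ (j i))) := by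
  intro n hn2
  obtain ⟨n, rfl⟩ : ∃ k, n = k + 1 := ⟨n - 1, by omega⟩
  rw [← wickMap_X_pow, stmt_18_general (by simpa using hκ 0), completeBell]
  simp [Fin.prod_univ_succ, hκ, smul_smul, div_eq_inv_mul, ← neg_smul]
end
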